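/- (Erdős–Nathanson) There exists an asymptotic basis A of order 2 with the following property: for every subset S ⊆ A, the set A \ S is an asymptotic basis of order 2 if and only if S is finite. In particular, A contains no minimal asymptotic basis of order 2. -/

import Mathlib

open Pointwise Filter

/-- The counting function of a set of nonnegative integers: the number of
positive elements of `A` that are at most `n`. -/
noncomputable def countingFn (A : Set ℕ) (n : ℕ) : ℕ := (A ∩ Set.Icc 1 n).ncard

/-- The Shnirel'man density `σ(A) = inf_{n ≥ 1} A(n)/n`. -/
noncomputable def shnirelmanDensity (A : Set ℕ) : ℝ :=
  ⨅ n : {n : ℕ // 0 < n}, (countingFn A (n : ℕ) : ℝ) / ((n : ℕ) : ℝ)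

/-- The lower asymptotic density `d_L(A) = liminf_{n → ∞} A(n)/n`. -/
noncomputable def lowerDensity (A : Set ℕ) : ℝ :=
  liminf (fun n : ℕ => (countingFn A n : ℝ) / (n : ℝ)) atTop

/-- `A` is an additive basis of order `h`: every nonnegative integer is the
sum of exactly `h` elements of `A` (with repetitions allowed). -/
def IsBasisOfOrder (A : Set ℕ) (h : ℕ) : Prop :=
  ∀ n : ℕ, ∃ c : Fin h → ℕ, (∀ i, c i ∈ A) ∧ ∑ i, c i = n

/-- `A` is an asymptotic basis of order `h`: every sufficiently large integer
is the sum of exactly `h` elements of `A` (with repetitions allowed). -/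
def IsAsymptoticBasisOfOrder (A : Set ℕ) (h : ℕ) : Prop :=
  ∀ᶠ n : ℕ in atTop, ∃ c : Fin h → ℕ, (∀ i, c i ∈ A) ∧ ∑ i, c i = n

/-- A minimal asymptotic basis of order `h` is an asymptotic basis of order `h`
no proper subset of which is an asymptotic basis of order `h`. -/
def IsMinimalAsymptoticBasisOfOrder (A : Set ℕ) (h : ℕ) : Prop :=
  IsAsymptoticBasisOfOrder A h ∧
    ∀ B : Set ℕ, B ⊂ A → ¬ IsAsymptoticBasisOfOrder B h

/-- A maximal asymptotic nonbasis of order `h` is a set that is not an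
asymptotic basis of order `h`, but such that adjoining any element outside it
produces an asymptotic basis of order `h`. -/
def IsMaximalAsymptoticNonbasisOfOrder (A : Set ℕ) (h : ℕ) : Prop :=
  ¬ IsAsymptoticBasisOfOrder A h ∧
    ∀ b : ℕ, b ∉ A → IsAsymptoticBasisOfOrder (A ∪ {b}) h

/-!
The basis is the union, over the scales `c = 7 ^ j`, of the blocks
`[7c, 16c] ∪ {25c + 1, 34c + 2}`. The sums within one block fill `[14c, 50c + 2]`, and the gap up
to `98c`, where the next scale takes over, is filled by adding `c`, an element of the block at
scale `c / 7`, to the interval `[49c, 112c]` at scale `7c`. So every large integer is a sum of two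
large elements, and deleting finitely many elements is harmless.

Conversely, every element `a` is indispensable for some `n ≥ a`: take `a + 7c` if `a` is an
isolated point of its block, and otherwise the sum of `a` with one of the two isolated points. So
deleting infinitely many elements leaves arbitrarily large integers unrepresented. A minimal
subbasis would thus be cofinite in the basis, and deleting one more element contradicts minimality.
-/

/-- The `h`-fold sumset of `A`: the sums of exactly `h` elements of `A`, repetitions allowed.
The indexed form matches `IsAsymptoticBasisOfOrder`; the pointwise `h • A` would be ambiguous with
dilation by `h`. -/
def foldSumset (A : Set ℕ) (h : ℕ) : Set ℕ := {n | ∃ c : Fin h → ℕ, (∀ i, c i ∈ A) ∧ ∑ i, c i = n}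

theorem isAsymptoticBasisOfOrder_iff {A : Set ℕ} {h : ℕ} :
    IsAsymptoticBasisOfOrder A h ↔ ∀ᶠ n in atTop, n ∈ foldSumset A h :=
  Iff.rfl

theorem foldSumset_mono {A B : Set ℕ} (hAB : A ⊆ B) (h : ℕ) : foldSumset A h ⊆ foldSumset B h :=
  fun _ ⟨c, hc, hn⟩ => ⟨c, fun i => hAB (hc i), hn⟩

theorem foldSumset_two (A : Set ℕ) : foldSumset A 2 = A + A := by
  ext n
  constructor
  · rintro ⟨c, hc, hn⟩
    exact ⟨c 0, hc 0, c 1, hc 1, (Fin.sum_univ_two c).symm.trans hn⟩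
  · rintro ⟨x, hx, y, hy, hn⟩
    exact ⟨![x, y], Fin.forall_fin_two.2 ⟨hx, hy⟩, (Fin.sum_univ_two _).trans hn⟩

theorem IsAsymptoticBasisOfOrder.nonempty {A : Set ℕ} {h : ℕ} (hA : IsAsymptoticBasisOfOrder A h) :
    A.Nonempty := by
  rw [isAsymptoticBasisOfOrder_iff] at hA
  obtain ⟨n, ⟨c, hc, hn⟩, hpos⟩ := (hA.and (eventually_gt_atTop 0)).exists
  obtain ⟨i, -, -⟩ := Finset.exists_ne_zero_of_sum_ne_zero (hn.trans_ne hpos.ne')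
  exact ⟨c i, hc i⟩

theorem isAsymptoticBasisOfOrder_diff_of_finite {A S : Set ℕ} {h : ℕ}
    (hA : ∀ B, ∀ᶠ n in atTop, n ∈ foldSumset (A ∩ Set.Ioi B) h) (hS : S.Finite) :
    IsAsymptoticBasisOfOrder (A \ S) h := by
  obtain ⟨B, hB⟩ := hS.bddAbove
  have hsub : A ∩ Set.Ioi B ⊆ A \ S := fun x hx => ⟨hx.1, fun hxS => (hB hxS).not_gt hx.2⟩
  exact isAsymptoticBasisOfOrder_iff.2 <| (hA B).mono fun n hn => foldSumset_mono hsub h hn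

theorem IsAsymptoticBasisOfOrder.finite_of_diff {A S : Set ℕ} {h : ℕ}
    (hAS : IsAsymptoticBasisOfOrder (A \ S) h)
    (hS : ∀ a ∈ S, ∃ n ≥ a, n ∉ foldSumset (A \ {a}) h) : S.Finite := by
  obtain ⟨N, hN⟩ := eventually_atTop.1 (isAsymptoticBasisOfOrder_iff.1 hAS)
  by_contra hinf
  obtain ⟨a, haS, hNa⟩ := Set.Infinite.exists_gt hinf N
  obtain ⟨n, han, hn⟩ := hS a haS
  have hsub : A \ S ⊆ A \ {a} := Set.sdiff_subset_sdiff_right (Set.singleton_subset_iff.2 haS)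
  exact hn (foldSumset_mono hsub h (hN n (hNa.le.trans han)))

theorem not_isMinimalAsymptoticBasisOfOrder_of_diff_iff_finite {A B : Set ℕ} {h : ℕ}
    (hA : ∀ S ⊆ A, IsAsymptoticBasisOfOrder (A \ S) h ↔ S.Finite) (hBA : B ⊆ A) :
    ¬ IsMinimalAsymptoticBasisOfOrder B h := by
  rintro ⟨hB, hmin⟩
  obtain ⟨b, hb⟩ := hB.nonempty
  have hfin : (A \ B).Finite := by
    rwa [← hA _ Set.sdiff_subset, Set.sdiff_sdiff_cancel_left hBA]
  have hsub : A \ B ∪ {b} ⊆ A :=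
    Set.union_subset Set.sdiff_subset (Set.singleton_subset_iff.2 (hBA hb))
  have hdiff : A \ (A \ B ∪ {b}) = B \ {b} := by
    rw [← Set.sdiff_sdiff, Set.sdiff_sdiff_cancel_left hBA]
  refine hmin (B \ {b}) (Set.sdiff_singleton_ssubset.2 hb) ?_
  exact hdiff ▸ (hA _ hsub).2 (hfin.union (Set.finite_singleton b))

theorem notMem_add_self_sdiff_singleton {M : Type*} [Add M] {A : Set M} {a n : M} :
    n ∉ A \ {a} + A \ {a} ↔ ∀ x ∈ A, ∀ y ∈ A, x + y = n → x = a ∨ y = a := by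
  simp only [Set.mem_add, Set.mem_sdiff, Set.mem_singleton_iff]
  grind

/-- The block at scale `c`: an interval and two isolated points, the shifts `+ 1` and `+ 2` making
the sums of the interval with itself and with each point fill adjacent, disjoint ranges. -/
def scaleBlock (c : ℕ) : Set ℕ := Set.Icc (7 * c) (16 * c) ∪ {25 * c + 1, 34 * c + 2}

/-- The union of the blocks at the scales `7 ^ j`, which is the basis of the theorem. -/
def blockBasis : Set ℕ := ⋃ j : ℕ, scaleBlock (7 ^ j)

/-- What is known about `blockBasis` from the viewpoint of its block at scale `c`: an element is at
least `7`, and lies in a block at scale at most `c / 7`, at scale `c`, or at scale at least `7 * c`;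
for the first and last of these only the resulting size bound is recorded. -/
def scaleEnvelope (c : ℕ) : Set ℕ :=
  {x | 7 ≤ x ∧ (7 * x ≤ 34 * c + 14 ∨ x ∈ scaleBlock c ∨ 49 * c ≤ x)}

theorem mem_scaleBlock {c x : ℕ} :
    x ∈ scaleBlock c ↔ (7 * c ≤ x ∧ x ≤ 16 * c) ∨ x = 25 * c + 1 ∨ x = 34 * c + 2 :=
  Iff.rfl

theorem scaleBlock_pow_subset_blockBasis (j : ℕ) : scaleBlock (7 ^ j) ⊆ blockBasis :=
  Set.subset_iUnion (fun j => scaleBlock (7 ^ j)) j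

theorem scaleBlock_subset_Ici (c : ℕ) : scaleBlock c ⊆ Set.Ici (7 * c) := by
  intro x hx
  rw [mem_scaleBlock] at hx
  rw [Set.mem_Ici]
  omega

theorem scaleBlock_subset_Iic (c : ℕ) : scaleBlock c ⊆ Set.Iic (34 * c + 2) := by
  intro x hx
  rw [mem_scaleBlock] at hx
  rw [Set.mem_Iic]
  omega

theorem mem_scaleBlock_add_self {c n : ℕ} (hn : n ∈ Set.Icc (14 * c) (50 * c + 2)) :
    n ∈ scaleBlock c + scaleBlock c := by
  obtain ⟨hlo, hhi⟩ := hn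
  simp only [Set.mem_add, mem_scaleBlock]
  rcases le_or_gt n (32 * c) with hn₁ | hn₁
  · exact ⟨n / 2, by omega, n - n / 2, by omega, by omega⟩
  rcases le_or_gt n (41 * c + 1) with hn₂ | hn₂
  · exact ⟨25 * c + 1, by omega, n - (25 * c + 1), by omega, by omega⟩
  · exact ⟨34 * c + 2, by omega, n - (34 * c + 2), by omega, by omega⟩

theorem mem_scaleBlock_add_scaleBlock_mul {c n : ℕ} (hn : n ∈ Set.Icc (350 * c) (791 * c)) :
    n ∈ scaleBlock c + scaleBlock (49 * c) := by
  obtain ⟨hlo, hhi⟩ := hn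
  simp only [Set.mem_add, mem_scaleBlock]
  exact ⟨7 * c, by omega, n - 7 * c, by omega, by omega⟩

-- `350 * c + 2` and `2450 * c + 2` are the largest sums covered by the blocks at scales `7 * c` and
-- `49 * c` in `mem_scaleBlock_add_self`.
theorem exists_pow_scale {n : ℕ} (hn : 353 ≤ n) :
    ∃ j, 350 * 7 ^ j + 3 ≤ n ∧ n ≤ 2450 * 7 ^ j + 2 := by
  obtain ⟨j, hlo, hhi⟩ :=
    exists_nat_pow_near (x := (n - 3) / 350) (y := 7) (by omega) (by norm_num)
  rw [pow_succ] at hhi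
  exact ⟨j, by omega, by omega⟩

theorem eventually_mem_blockBasis_inter_Ioi_add_self (B : ℕ) :
    ∀ᶠ n in atTop, n ∈ blockBasis ∩ Set.Ioi B + blockBasis ∩ Set.Ioi B := by
  filter_upwards [eventually_ge_atTop (2450 * B + 353)] with n hn
  obtain ⟨j, hlo, hhi⟩ := exists_pow_scale (n := n) (by omega)
  have hsub (i : ℕ) (hi : 7 ^ j ≤ 7 ^ i) : scaleBlock (7 ^ i) ⊆ blockBasis ∩ Set.Ioi B := by
    refine Set.subset_inter (scaleBlock_pow_subset_blockBasis i) ?_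
    exact (scaleBlock_subset_Ici _).trans (Set.Ici_subset_Ioi.2 (by omega))
  have hj := hsub j le_rfl
  have hj₂ := hsub (j + 2) (Nat.pow_le_pow_right (by norm_num) (by omega))
  rw [show 7 ^ (j + 2) = 49 * 7 ^ j by ring] at hj₂
  rcases le_total n (791 * 7 ^ j) with h | h
  · exact Set.add_subset_add hj hj₂ (mem_scaleBlock_add_scaleBlock_mul ⟨by omega, h⟩)
  · exact Set.add_subset_add hj₂ hj₂ (mem_scaleBlock_add_self ⟨by omega, by omega⟩)

theorem blockBasis_subset_scaleEnvelope (j : ℕ) : blockBasis ⊆ scaleEnvelope (7 ^ j) := by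
  intro x hx
  obtain ⟨i, hi⟩ := Set.mem_iUnion.1 hx
  have hlo : 7 * 7 ^ i ≤ x := scaleBlock_subset_Ici _ hi
  have hhi : x ≤ 34 * 7 ^ i + 2 := scaleBlock_subset_Iic _ hi
  have hpos : 0 < 7 ^ i := by positivity
  refine ⟨by omega, ?_⟩
  rcases lt_trichotomy i j with hij | rfl | hji
  · have : 7 ^ (i + 1) ≤ 7 ^ j := Nat.pow_le_pow_right (by norm_num) hij
    exact Or.inl (by omega)
  · exact Or.inr (Or.inl hi)
  · have : 7 ^ (j + 1) ≤ 7 ^ i := Nat.pow_le_pow_right (by norm_num) hji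
    exact Or.inr (Or.inr (by omega))

section Indispensable

variable {c a : ℕ}

theorem isolated_add_left_notMem (ha : a = 25 * c + 1 ∨ a = 34 * c + 2) :
    a + 7 * c ∉ scaleEnvelope c \ {a} + scaleEnvelope c \ {a} := by
  rw [notMem_add_self_sdiff_singleton]
  intro x hx y hy hxy
  simp only [scaleEnvelope, mem_scaleBlock, Set.mem_ofPred_eq] at hx hy
  omega

-- The sum is below `49 * c + 7` and every element is at least `7`, so blocks at larger scales
-- cannot contribute.
theorem lower_add_outer_notMem (ha : a ∈ Set.Icc (7 * c) (15 * c)) :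
    a + (34 * c + 2) ∉ scaleEnvelope c \ {a} + scaleEnvelope c \ {a} := by
  obtain ⟨hlo, hhi⟩ := ha
  rw [notMem_add_self_sdiff_singleton]
  intro x hx y hy hxy
  simp only [scaleEnvelope, mem_scaleBlock, Set.mem_ofPred_eq] at hx hy
  omega

-- The critical competitor is `(34 * c + 2) + (a - (9 * c + 1))`, whose second summand falls into
-- the gap between the smaller scales and `7 * c`.
theorem upper_add_inner_notMem (ha : a ∈ Set.Icc (15 * c + 1) (16 * c)) :
    a + (25 * c + 1) ∉ scaleEnvelope c \ {a} + scaleEnvelope c \ {a} := by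
  obtain ⟨hlo, hhi⟩ := ha
  rw [notMem_add_self_sdiff_singleton]
  intro x hx y hy hxy
  simp only [scaleEnvelope, mem_scaleBlock, Set.mem_ofPred_eq] at hx hy
  omega

theorem exists_ge_notMem_scaleEnvelope (ha : a ∈ scaleBlock c) :
    ∃ n ≥ a, n ∉ scaleEnvelope c \ {a} + scaleEnvelope c \ {a} := by
  rcases ha with ⟨hlo, hhi⟩ | hiso
  · rcases le_or_gt a (15 * c) with h | h
    · exact ⟨_, Nat.le_add_right _ _, lower_add_outer_notMem ⟨hlo, h⟩⟩
    · exact ⟨_, Nat.le_add_right _ _, upper_add_inner_notMem ⟨h, hhi⟩⟩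
  · exact ⟨_, Nat.le_add_right _ _, isolated_add_left_notMem hiso⟩

theorem exists_ge_notMem_blockBasis (ha : a ∈ blockBasis) :
    ∃ n ≥ a, n ∉ blockBasis \ {a} + blockBasis \ {a} := by
  obtain ⟨j, hj⟩ := Set.mem_iUnion.1 ha
  obtain ⟨n, han, hn⟩ := exists_ge_notMem_scaleEnvelope hj
  have hsub := Set.sdiff_subset_sdiff_left (t := {a}) (blockBasis_subset_scaleEnvelope j)
  exact ⟨n, han, fun h => hn (Set.add_subset_add hsub hsub h)⟩

end Indispensable

theorem isAsymptoticBasisOfOrder_blockBasis_diff_iff {S : Set ℕ} (hS : S ⊆ blockBasis) :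
    IsAsymptoticBasisOfOrder (blockBasis \ S) 2 ↔ S.Finite := by
  refine ⟨fun h => h.finite_of_diff fun a ha => ?_, isAsymptoticBasisOfOrder_diff_of_finite ?_⟩
  · simpa only [foldSumset_two] using exists_ge_notMem_blockBasis (hS ha)
  · simpa only [foldSumset_two] using eventually_mem_blockBasis_inter_Ioi_add_self

theorem erdos_nathanson_basis_without_minimal_subbasis :
    ∃ A : Set ℕ, IsAsymptoticBasisOfOrder A 2 ∧
      (∀ S : Set ℕ, S ⊆ A →
        (IsAsymptoticBasisOfOrder (A \ S) 2 ↔ S.Finite)) ∧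
      ∀ B : Set ℕ, B ⊆ A → ¬ IsMinimalAsymptoticBasisOfOrder B 2 := by
  have hdiff (S : Set ℕ) (hS : S ⊆ blockBasis) :=
    isAsymptoticBasisOfOrder_blockBasis_diff_iff hS
  have hbasis : IsAsymptoticBasisOfOrder blockBasis 2 := by
    simpa only [Set.sdiff_empty] using (hdiff ∅ (Set.empty_subset _)).2 Set.finite_empty
  exact ⟨blockBasis, hbasis, hdiff, fun B hB =>
    not_isMinimalAsymptoticBasisOfOrder_of_diff_iff_finite hdiff hB⟩
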